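/- arXiv:math/0301180 — 2 statements merged into one kernel-verified Lean document; each statement's English description precedes it below -/
import Mathlib

section
/- Let g be an invertible matrix in M_{kl}(ℂ). Then conjugation by g maps the subalgebra {A ⊗ I_l : A ∈ M_k(ℂ)} onto itself (i.e. g·{A ⊗ I_l : A ∈ M_k(ℂ)}·g⁻¹ = {A ⊗ I_l : A ∈ M_k(ℂ)}) if and only if there exist invertible matrices a ∈ M_k(ℂ) and b ∈ M_l(ℂ) with g = a ⊗ b. -/
/-!
Write `g` as an `l × l` array of `k × k` blocks `T i j`, where `(T i j) p q = g (p, i) (q, j)`.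
If conjugation by `g` maps `A ⊗ I` to `A' ⊗ I`, then `T i j * A = A' * T i j` for every `i, j`.
The kernel of a block is therefore stable under every matrix `A`, so a nonzero block is invertible.
Fixing an invertible block `a`, each `a⁻¹ * T i j` commutes with all matrices, hence is a scalar
`b i j`; this says `g = a ⊗ b`, and `det g = (det a) ^ l * (det b) ^ k` makes `b` invertible.
This uses only that the image is contained in the subalgebra. Conversely, conjugation by `a ⊗ b`
acts on `A ⊗ I` as conjugation of `A` by `a`, which is a bijection.
-/

open Matrix Kronecker

/-- The `(i, j)` block of `g` with respect to the second tensor factor. -/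
def tensorBlock {k l : ℕ} (g : Matrix (Fin k × Fin l) (Fin k × Fin l) ℂ) (i j : Fin l) :
    Matrix (Fin k) (Fin k) ℂ :=
  Matrix.of fun p q => g (p, i) (q, j)

lemma tensorBlock_mul_kronecker_one {k l : ℕ} (g : Matrix (Fin k × Fin l) (Fin k × Fin l) ℂ)
    (A : Matrix (Fin k) (Fin k) ℂ) (i j : Fin l) :
    tensorBlock (g * (A ⊗ₖ (1 : Matrix (Fin l) (Fin l) ℂ))) i j = tensorBlock g i j * A := by
  ext p q
  simp [tensorBlock, Matrix.mul_apply, Fintype.sum_prod_type, Matrix.one_apply]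

lemma tensorBlock_kronecker_one_mul {k l : ℕ} (g : Matrix (Fin k × Fin l) (Fin k × Fin l) ℂ)
    (A : Matrix (Fin k) (Fin k) ℂ) (i j : Fin l) :
    tensorBlock ((A ⊗ₖ (1 : Matrix (Fin l) (Fin l) ℂ)) * g) i j = A * tensorBlock g i j := by
  ext p q
  simp [tensorBlock, Matrix.mul_apply, Fintype.sum_prod_type, Matrix.one_apply]

/-- Schur's lemma: the kernel of `T` is stable under all matrices, hence trivial when `T ≠ 0`. -/
lemma isUnit_of_intertwines {k : ℕ} {T : Matrix (Fin k) (Fin k) ℂ} (hT : T ≠ 0)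
    (h : ∀ A : Matrix (Fin k) (Fin k) ℂ, ∃ A' : Matrix (Fin k) (Fin k) ℂ, T * A = A' * T) :
    IsUnit T := by
  rw [Matrix.isUnit_iff_isUnit_det, isUnit_iff_ne_zero]
  intro hdet
  obtain ⟨v, hv, hTv⟩ := Matrix.exists_mulVec_eq_zero_iff.mpr hdet
  obtain ⟨q, hq⟩ := Function.ne_iff.mp hv
  apply hT
  ext p r
  -- `single r q 1` sends `v` to `v q` times the basis vector `r`, so column `r` of `T` vanishes.
  obtain ⟨A', hA'⟩ := h (Matrix.single r q 1)
  have h0 : (T * Matrix.single r q 1) *ᵥ v = 0 := by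
    rw [hA', ← Matrix.mulVec_mulVec, hTv, Matrix.mulVec_zero]
  have h1 := congrFun h0 p
  have h2 : ((T * Matrix.single r q 1) *ᵥ v) p = T p r * v q := by
    rw [Matrix.mulVec, dotProduct, Finset.sum_eq_single q]
    · simp
    · intro b _ hb
      simp [Matrix.mul_single_apply_of_ne, hb]
    · simp
  rw [h2] at h1
  exact (mul_eq_zero.mp h1).resolve_right hq

/-- Intertwiners of the same pair of actions differ from an invertible one by a scalar. -/
lemma exists_smul_of_intertwines {k : ℕ} (a : (Matrix (Fin k) (Fin k) ℂ)ˣ)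
    (S : Matrix (Fin k) (Fin k) ℂ)
    (h : ∀ A : Matrix (Fin k) (Fin k) ℂ, ∃ A' : Matrix (Fin k) (Fin k) ℂ,
      (a : Matrix (Fin k) (Fin k) ℂ) * A = A' * a ∧ S * A = A' * S) :
    ∃ c : ℂ, S = c • (a : Matrix (Fin k) (Fin k) ℂ) := by
  have hc : ((a⁻¹ : _ˣ) : Matrix (Fin k) (Fin k) ℂ) * S ∈ Set.range (Matrix.scalar (Fin k)) := by
    refine Matrix.mem_range_scalar_of_commute_single fun i j _ => ?_
    obtain ⟨A', h1, h2⟩ := h (Matrix.single i j 1)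
    have h3 : A' = a.val * Matrix.single i j 1 * ((a⁻¹ : _ˣ) : Matrix (Fin k) (Fin k) ℂ) := by
      rw [h1, mul_assoc, Units.mul_inv, mul_one]
    rw [Commute, SemiconjBy, mul_assoc, h2, h3]
    simp only [mul_assoc, Units.inv_mul_cancel_left]
  obtain ⟨c, hc⟩ := hc
  refine ⟨c, ?_⟩
  rw [← Units.mul_inv_cancel_left a S, ← hc, Matrix.scalar_apply, ← Matrix.smul_one_eq_diagonal,
    mul_smul_comm, mul_one]

/-- For invertible `g ∈ M_{kl}(ℂ)`, conjugation by `g` maps the subalgebra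
`{A ⊗ I_l : A ∈ M_k(ℂ)}` onto itself iff `g = a ⊗ b` for some invertible `a ∈ M_k(ℂ)`,
`b ∈ M_l(ℂ)`. -/
theorem stmt_7 (k l : ℕ) (g : (Matrix (Fin k × Fin l) (Fin k × Fin l) ℂ)ˣ) :
    ((fun X => (g : Matrix (Fin k × Fin l) (Fin k × Fin l) ℂ) * X *
        ((g⁻¹ : _ˣ) : Matrix (Fin k × Fin l) (Fin k × Fin l) ℂ)) ''
      {X | ∃ A : Matrix (Fin k) (Fin k) ℂ, X = A ⊗ₖ (1 : Matrix (Fin l) (Fin l) ℂ)}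
      = {X | ∃ A : Matrix (Fin k) (Fin k) ℂ, X = A ⊗ₖ (1 : Matrix (Fin l) (Fin l) ℂ)}) ↔
    ∃ (a : (Matrix (Fin k) (Fin k) ℂ)ˣ) (b : (Matrix (Fin l) (Fin l) ℂ)ˣ),
      (g : Matrix (Fin k × Fin l) (Fin k × Fin l) ℂ)
        = (a : Matrix (Fin k) (Fin k) ℂ) ⊗ₖ (b : Matrix (Fin l) (Fin l) ℂ) := by
  constructor
  · intro h
    have hint : ∀ A : Matrix (Fin k) (Fin k) ℂ, ∃ A' : Matrix (Fin k) (Fin k) ℂ,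
        ∀ i j, tensorBlock g.val i j * A = A' * tensorBlock g.val i j := by
      intro A
      obtain ⟨A', hA'⟩ := h.subset ⟨_, ⟨A, rfl⟩, rfl⟩
      refine ⟨A', fun i j => ?_⟩
      rw [← tensorBlock_mul_kronecker_one, ← tensorBlock_kronecker_one_mul, ← hA']
      simp
    by_cases hne : ∃ i j, tensorBlock g.val i j ≠ 0
    · obtain ⟨i₀, j₀, h₀⟩ := hne
      obtain ⟨a, ha⟩ := isUnit_of_intertwines h₀ fun A => (hint A).imp fun A' hA' => hA' i₀ j₀
      have hb : ∀ i j, ∃ c : ℂ, tensorBlock g.val i j = c • (a : Matrix (Fin k) (Fin k) ℂ) :=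
        fun i j => exists_smul_of_intertwines a _ fun A =>
          (hint A).imp fun A' hA' => ⟨ha ▸ hA' i₀ j₀, hA' i j⟩
      choose b hb using hb
      have hg : g.val = (a : Matrix (Fin k) (Fin k) ℂ) ⊗ₖ Matrix.of b := by
        ext ⟨p, i⟩ ⟨q, j⟩
        have := congrFun (congrFun (hb i j) p) q
        simpa [tensorBlock, mul_comm] using this
      have hk : k ≠ 0 := by
        rintro rfl
        exact h₀ (Subsingleton.elim _ _)
      have hbu : IsUnit (Matrix.of b) := by
        have hd := (Matrix.isUnit_iff_isUnit_det _).mp g.isUnit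
        rw [hg, Matrix.det_kronecker, Fintype.card_fin, Fintype.card_fin] at hd
        rw [Matrix.isUnit_iff_isUnit_det]
        exact (isUnit_pow_iff hk).mp (isUnit_of_mul_isUnit_right hd)
      exact ⟨a, hbu.unit, hg⟩
    · push Not at hne
      -- All blocks vanish, so `g = 0` is invertible; this happens only for `k = 0` or `l = 0`.
      have hg : g.val = 0 := by
        ext ⟨p, i⟩ ⟨q, j⟩
        exact congrFun (congrFun (hne i j) p) q
      have h01 : (0 : Matrix (Fin k × Fin l) (Fin k × Fin l) ℂ) = 1 := by
        rw [← g.mul_inv, hg, zero_mul]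
      have := subsingleton_of_zero_eq_one h01
      exact ⟨1, 1, Subsingleton.elim _ _⟩
  · rintro ⟨a, b, hg⟩
    have hginv : ((g⁻¹ : _ˣ) : Matrix (Fin k × Fin l) (Fin k × Fin l) ℂ)
        = ((a⁻¹ : _ˣ) : Matrix (Fin k) (Fin k) ℂ) ⊗ₖ ((b⁻¹ : _ˣ) : Matrix (Fin l) (Fin l) ℂ) := by
      apply Units.inv_eq_of_mul_eq_one_right
      rw [hg, ← Matrix.mul_kronecker_mul, Units.mul_inv, Units.mul_inv, Matrix.one_kronecker_one]
    have hconj : ∀ A : Matrix (Fin k) (Fin k) ℂ,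
        g.val * (A ⊗ₖ (1 : Matrix (Fin l) (Fin l) ℂ)) * (g⁻¹).val
          = (a.val * A * (a⁻¹).val) ⊗ₖ (1 : Matrix (Fin l) (Fin l) ℂ) := by
      intro A
      rw [hginv, hg, ← Matrix.mul_kronecker_mul, ← Matrix.mul_kronecker_mul, mul_one, Units.mul_inv]
    ext X
    constructor
    · rintro ⟨_, ⟨A, rfl⟩, rfl⟩
      exact ⟨_, hconj A⟩
    · rintro ⟨A, rfl⟩
      refine ⟨_, ⟨(a⁻¹).val * A * a.val, rfl⟩, ?_⟩
      simp only [hconj]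
      simp [mul_assoc]
end

section
/- For any two unital *-algebra homomorphisms f, g : M_k(ℂ) → M_n(ℂ) (where the star operation on matrices is the conjugate transpose), there exists a unitary matrix u ∈ M_n(ℂ) such that g(a) = u · f(a) · u* for all a ∈ M_k(ℂ). -/
/-!
The image `f e₀₀` of a diagonal matrix unit is an orthogonal projection. The matrix units `e_{i0}`
and `e_{0i}` show that all `f e_{ii}` have the same trace, and these traces add up to `n`, so
`k * trace (f e₀₀) = n`; likewise for `g`. Hence `f e₀₀` and `g e₀₀` have equal trace, and two
orthogonal projections of equal trace are linked by a partial isometry `v` with `v* v = f e₀₀` and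
`v v* = g e₀₀` (`exists_partialIsometry`). The matrix `u = ∑ i, g e_{i0} * v * f e_{0i}` spreads
`v` over all matrix units: it is unitary and satisfies `g a * u = u * f a`.
-/

open Matrix

/-- An orthogonal projection `p` factors as `a * a*`, where the columns of `a` are an orthonormal
basis of the range of `p`; the number of columns is the trace of `p`. -/
theorem exists_isometry_of_projection {n : ℕ} (p : Matrix (Fin n) (Fin n) ℂ)
    (hp : p.IsHermitian) (hpp : p * p = p) :
    ∃ (r : ℕ) (a : Matrix (Fin n) (Fin r) ℂ), aᴴ * a = 1 ∧ a * aᴴ = p ∧ p.trace = r := by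
  obtain ⟨U, hU⟩ : ∃ U : Matrix (Fin n) (Fin n) ℂ, U = hp.eigenvectorUnitary := ⟨_, rfl⟩
  obtain ⟨d, hd⟩ : ∃ d : Fin n → ℂ, d = RCLike.ofReal ∘ hp.eigenvalues := ⟨_, rfl⟩
  have hUU : Uᴴ * U = 1 := by
    rw [hU]; exact Unitary.coe_star_mul_self hp.eigenvectorUnitary
  have hspec : p = U * diagonal d * Uᴴ := by
    have := hp.spectral_theorem
    rw [Unitary.conjStarAlgAut_apply] at this
    rw [hU, hd]; exact this
  have hD : diagonal d = Uᴴ * p * U := by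
    calc diagonal d = (Uᴴ * U) * diagonal d * (Uᴴ * U) := by rw [hUU]; simp
      _ = Uᴴ * p * U := by rw [hspec]; simp only [Matrix.mul_assoc]
  have hUU' : U * Uᴴ = 1 := mul_eq_one_comm.mp hUU
  have hDD : diagonal d * diagonal d = diagonal d := by
    calc diagonal d * diagonal d = Uᴴ * p * (U * Uᴴ) * p * U := by
          rw [hD]; simp only [Matrix.mul_assoc]
      _ = Uᴴ * (p * p) * U := by rw [hUU']; simp only [Matrix.mul_one, Matrix.mul_assoc]
      _ = diagonal d := by rw [hpp, hD]
  have hd01 : ∀ i, d i = 0 ∨ d i = 1 := fun i => by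
    have h := congrFun (congrFun hDD i) i
    simp only [diagonal_mul_diagonal, diagonal_apply_eq] at h
    rcases eq_or_ne (d i) 0 with h0 | h0
    · exact Or.inl h0
    · exact Or.inr (mul_left_cancel₀ h0 (by rw [h, mul_one]))
  classical
  let e := (Fintype.equivFin {i // d i ≠ 0}).symm
  refine ⟨Fintype.card {i // d i ≠ 0}, U.submatrix id (fun j => (e j).1), ?_, ?_, ?_⟩
  · ext i j
    have h := congrFun (congrFun hUU (e i).1) (e j).1
    simp only [mul_apply, conjTranspose_apply, submatrix_apply, id, one_apply] at h ⊢
    rw [h]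
    simp [Subtype.val_inj]
  · rw [hspec]
    ext i j
    rw [mul_apply, mul_apply]
    simp only [mul_diagonal, conjTranspose_apply, submatrix_apply, id]
    rw [e.sum_comp (fun x => U i x.1 * star (U j x.1)),
      ← Finset.sum_subtype (Finset.univ.filter fun x => d x ≠ 0) (by simp)
        (fun x => U i x * star (U j x)), Finset.sum_filter]
    refine Finset.sum_congr rfl fun x _ => ?_
    rcases hd01 x with h | h <;> simp [h]
  · rw [hspec, Matrix.trace_mul_comm, ← Matrix.mul_assoc, hUU, Matrix.one_mul, trace_diagonal,
      Fintype.card_subtype, Finset.card_filter, Nat.cast_sum]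
    refine Finset.sum_congr rfl fun i _ => ?_
    rcases hd01 i with h | h <;> simp [h]

/-- Murray–von Neumann equivalence of orthogonal projections of equal trace. -/
theorem exists_partialIsometry {n : ℕ} (p q : Matrix (Fin n) (Fin n) ℂ)
    (hp : p.IsHermitian) (hpp : p * p = p) (hq : q.IsHermitian) (hqq : q * q = q)
    (htr : p.trace = q.trace) :
    ∃ v : Matrix (Fin n) (Fin n) ℂ, star v * v = p ∧ v * star v = q := by
  obtain ⟨r, a, ha, hap, har⟩ := exists_isometry_of_projection p hp hpp
  obtain ⟨s, b, hb, hbq, hbs⟩ := exists_isometry_of_projection q hq hqq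
  obtain rfl : r = s := by
    have : (r : ℂ) = s := by rw [← har, htr, hbs]
    exact_mod_cast this
  refine ⟨b * aᴴ, ?_, ?_⟩
  · rw [star_eq_conjTranspose, conjTranspose_mul, conjTranspose_conjTranspose]
    calc a * bᴴ * (b * aᴴ) = a * (bᴴ * b) * aᴴ := by simp only [Matrix.mul_assoc]
      _ = p := by rw [hb, Matrix.mul_one, hap]
  · rw [star_eq_conjTranspose, conjTranspose_mul, conjTranspose_conjTranspose]
    calc b * aᴴ * (a * bᴴ) = b * (aᴴ * a) * bᴴ := by simp only [Matrix.mul_assoc]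
      _ = q := by rw [ha, Matrix.mul_one, hbq]

section Images

variable {k n : ℕ} (f : Matrix (Fin k) (Fin k) ℂ →⋆ₐ[ℂ] Matrix (Fin n) (Fin n) ℂ)

theorem map_single_mul_single (i j l : Fin k) :
    f (single i j 1) * f (single j l 1) = f (single i l 1) := by
  rw [← map_mul, single_mul_single_same, one_mul]

theorem map_single_mul_single_of_ne (i j j' l : Fin k) (h : j ≠ j') :
    f (single i j 1) * f (single j' l 1) = 0 := by
  rw [← map_mul, single_mul_single_of_ne (h := h), map_zero]

theorem star_map_single (i j : Fin k) : star (f (single i j 1)) = f (single j i 1) := by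
  rw [← map_star, star_eq_conjTranspose, conjTranspose_single, star_one]

theorem sum_map_single : ∑ i, f (single i i 1) = 1 := by
  rw [← map_sum, sum_single_one, map_one]

theorem card_mul_trace_map_single (z : Fin k) : (k : ℂ) * (f (single z z 1)).trace = n := by
  have h : ∀ i, (f (single i i 1)).trace = (f (single z z 1)).trace := fun i => by
    rw [← map_single_mul_single f i z i, trace_mul_comm, map_single_mul_single]
  have h1 := congrArg trace (sum_map_single f)
  rw [trace_sum, Finset.sum_congr rfl fun i _ => h i] at h1
  simpa using h1

end Images

/-- For any two unital `*`-algebra homomorphisms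
`f, g : M_k(ℂ) → M_n(ℂ)` (star = conjugate transpose), there is a unitary `u ∈ M_n(ℂ)`
with `g a = u * f a * u*` for all `a`. -/
theorem stmt_18 (k n : ℕ)
    (f g : Matrix (Fin k) (Fin k) ℂ →⋆ₐ[ℂ] Matrix (Fin n) (Fin n) ℂ) :
    ∃ u : Matrix (Fin n) (Fin n) ℂ, u ∈ Matrix.unitaryGroup (Fin n) ℂ ∧
      ∀ a : Matrix (Fin k) (Fin k) ℂ, g a = u * f a * star u := by
  rcases Nat.eq_zero_or_pos k with rfl | hk
  -- For `k = 0` every `a` equals `0`, and any unitary works.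
  · refine ⟨1, one_mem _, fun a => ?_⟩
    rw [Subsingleton.elim a 0, map_zero, map_zero, mul_zero, zero_mul]
  let z : Fin k := ⟨0, hk⟩
  have htr : (f (single z z 1)).trace = (g (single z z 1)).trace :=
    mul_left_cancel₀ (Nat.cast_ne_zero.mpr hk.ne' : (k : ℂ) ≠ 0)
      ((card_mul_trace_map_single f z).trans (card_mul_trace_map_single g z).symm)
  obtain ⟨v, hvp, hvq⟩ := exists_partialIsometry (f (single z z 1)) (g (single z z 1))
    (star_map_single f z z) (map_single_mul_single f z z z)
    (star_map_single g z z) (map_single_mul_single g z z z) htr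
  obtain ⟨u, hu⟩ : ∃ u, u = ∑ i, g (single i z 1) * v * f (single z i 1) := ⟨_, rfl⟩
  have hstar : star u = ∑ i, f (single i z 1) * star v * g (single z i 1) := by
    simp only [hu, star_sum, star_mul, star_map_single, mul_assoc]
  have huf : ∀ r s, u * f (single r s 1) = g (single r z 1) * v * f (single z s 1) := by
    intro r s
    rw [hu, Finset.sum_mul, Finset.sum_eq_single r]
    · rw [mul_assoc, map_single_mul_single]
    · intro i _ hi
      rw [mul_assoc, map_single_mul_single_of_ne f _ _ _ _ hi, mul_zero]
    · simp
  have hgu : ∀ r s, g (single r s 1) * u = g (single r z 1) * v * f (single z s 1) := by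
    intro r s
    rw [hu, Finset.mul_sum, Finset.sum_eq_single s]
    · rw [← mul_assoc, ← mul_assoc, map_single_mul_single]
    · intro i _ hi
      rw [← mul_assoc, ← mul_assoc, map_single_mul_single_of_ne g _ _ _ _ hi.symm, zero_mul,
        zero_mul]
    · simp
  have huu : u * star u = 1 := by
    rw [hstar, Finset.mul_sum, ← sum_map_single g]
    refine Finset.sum_congr rfl fun i _ => ?_
    rw [← mul_assoc, ← mul_assoc, huf, ← hvp]
    calc g (single i z 1) * v * (star v * v) * star v * g (single z i 1)
        = g (single i z 1) * ((v * star v) * (v * star v)) * g (single z i 1) := by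
          simp only [mul_assoc]
      _ = g (single i i 1) := by
          rw [hvq, map_single_mul_single, map_single_mul_single, map_single_mul_single]
  have hcomm : ∀ a, g a * u = u * f a := by
    intro a
    induction a using Matrix.induction_on' with
    | h_zero => rw [map_zero, map_zero, zero_mul, mul_zero]
    | h_add p q hp hq => rw [map_add, map_add, add_mul, mul_add, hp, hq]
    | h_std_basis i j x =>
      have hx : single i j x = x • single i j (1 : ℂ) := by rw [smul_single, smul_eq_mul, mul_one]
      rw [hx, map_smul, map_smul, smul_mul_assoc, mul_smul_comm, hgu, huf]
  refine ⟨u, mem_unitaryGroup_iff.mpr huu, fun a => ?_⟩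
  rw [← hcomm, mul_assoc, huu, mul_one]
end
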